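/- Euler relation for jackets (connected case): if the (D+1)-colored graph encoded by σ is connected, i.e. C(σ) = 1, then for every cyclic permutation π of the color set {0,1,…,D} there exists a nonnegative integer g (the genus of the jacket J_π) such that F_π(σ) = (D−1)·k + 2 − 2g. In particular F_π(σ) ≤ (D−1)·k + 2 and F_π(σ) has the same parity as (D−1)·k. -/

import Mathlib

/-- Number of cycles of a permutation counting fixed points: the number of orbits
on `Fin k` of the cyclic group generated by `τ`. -/
noncomputable def cycleCount {k : ℕ} (τ : Equiv.Perm (Fin k)) : ℕ :=
  Nat.card (MulAction.orbitRel.Quotient (Subgroup.zpowers τ) (Fin k))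

/-- Total number of faces of the `(D+1)`-colored graph encoded by `σ`:
`F(σ) = Σ_{c₁ < c₂} c(σ⁽ᶜ¹⁾ ∘ (σ⁽ᶜ²⁾)⁻¹)`. -/
noncomputable def faceCount {k D : ℕ} (σ : Fin (D + 1) → Equiv.Perm (Fin k)) : ℕ :=
  ∑ p ∈ Finset.univ.filter (fun p : Fin (D + 1) × Fin (D + 1) => p.1 < p.2),
    cycleCount (σ p.1 * (σ p.2)⁻¹)

/-- Number of connected components of the `(D+1)`-colored graph encoded by `σ`:
the number of orbits on `Fin k` of the subgroup generated by `(σ⁽⁰⁾)⁻¹ ∘ σ⁽ᶜ⁾`, `1 ≤ c ≤ D`. -/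
noncomputable def compCount {k D : ℕ} (σ : Fin (D + 1) → Equiv.Perm (Fin k)) : ℕ :=
  Nat.card (MulAction.orbitRel.Quotient
    (Subgroup.closure
      {g : Equiv.Perm (Fin k) | ∃ c : Fin (D + 1), c ≠ 0 ∧ g = (σ 0)⁻¹ * σ c}) (Fin k))

/-- Face count of the jacket associated to the cyclic color permutation `π`:
`F_π(σ) = Σ_{q=0}^{D} c(σ^{(π^q(0))} ∘ (σ^{(π^{q+1}(0))})⁻¹)`. -/
noncomputable def jacketFaceCount {k D : ℕ} (σ : Fin (D + 1) → Equiv.Perm (Fin k))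
    (π : Equiv.Perm (Fin (D + 1))) : ℕ :=
  ∑ q ∈ Finset.range (D + 1),
    cycleCount (σ ((π ^ q) 0) * (σ ((π ^ (q + 1)) 0))⁻¹)

/-!
Let `B c` be composition with `σ c` on functions `Fin k → ℚ`. The operators `B (π c) - B c` sum to
zero over the colors, the `c`-th has corank the number of faces of colors `c` and `π c`, and their
common kernel and common cokernel are both the functions constant on the connected components,
because `π` is transitive on colors. Factoring the zero sum through the product of the ranges bounds
the sum of the ranks from below (Scott's lemma), which is the nonnegativity of the genus.
Integrality of the genus is the multiplicativity of the sign: each color occurs twice in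
`∏ c, σ c * (σ (π c))⁻¹`.
-/

open Equiv Equiv.Perm Module

section LinearAlgebra

theorem dotProductEquiv_comp_funLeft {R α : Type*} [CommSemiring R] [Fintype α] [DecidableEq α]
    (s : Perm α) (h : α → R) :
    dotProductEquiv R α h ∘ₗ LinearMap.funLeft R R s = dotProductEquiv R α (h ∘ ⇑s⁻¹) :=
  LinearMap.ext fun x => dotProduct_comp_equiv_symm h x s⁻¹

theorem range_lsum {R N ι : Type*} [Semiring R] [AddCommMonoid N] [Module R N] [Fintype ι]
    [DecidableEq ι] {M : ι → Type*} [∀ i, AddCommMonoid (M i)] [∀ i, Module R (M i)]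
    (f : (i : ι) → M i →ₗ[R] N) :
    LinearMap.range (LinearMap.lsum R M ℕ f) = ⨆ i, LinearMap.range (f i) := by
  have hsingle (i : ι) : LinearMap.lsum R M ℕ f ∘ₗ LinearMap.single R M i = f i :=
    congrFun ((LinearMap.lsum R M ℕ).symm_apply_apply f) i
  rw [LinearMap.range_eq_map, ← LinearMap.iSup_range_single, Submodule.map_iSup]
  simp only [← LinearMap.range_comp, hsingle]

theorem iInf_ker_dualMap {R M N : Type*} {ι : Sort*} [CommSemiring R] [AddCommMonoid M]
    [Module R M] [AddCommMonoid N] [Module R N] (T : ι → M →ₗ[R] N) :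
    ⨅ i, LinearMap.ker (T i).dualMap = (⨆ i, LinearMap.range (T i)).dualAnnihilator := by
  simp only [LinearMap.ker_dualMap_eq_dualAnnihilator_range, Submodule.dualAnnihilator_iSup_eq]

theorem finrank_range_add_finrank_range_le_of_comp_eq_zero {K U V W : Type*} [DivisionRing K]
    [AddCommGroup U] [Module K U] [AddCommGroup V] [Module K V] [FiniteDimensional K V]
    [AddCommGroup W] [Module K W] {f : U →ₗ[K] V} {g : V →ₗ[K] W} (h : g ∘ₗ f = 0) :
    finrank K (LinearMap.range f) + finrank K (LinearMap.range g) ≤ finrank K V := by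
  rw [← g.finrank_range_add_finrank_ker, add_comm]
  gcongr
  exact Submodule.finrank_mono (LinearMap.range_le_ker_iff.2 h)

theorem finrank_add_finrank_le_sum_finrank_range {K V W ι : Type*} [Field K] [Fintype ι]
    [AddCommGroup V] [Module K V] [FiniteDimensional K V]
    [AddCommGroup W] [Module K W] [FiniteDimensional K W] {T : ι → V →ₗ[K] W} (hT : ∑ i, T i = 0) :
    finrank K V + finrank K W ≤ ∑ i, finrank K (LinearMap.range (T i)) +
      finrank K (⨅ i, LinearMap.ker (T i) : Submodule K V) +
      finrank K (⨅ i, LinearMap.ker (T i).dualMap : Submodule K (Dual K W)) := by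
  classical
  let toRanges : V →ₗ[K] (i : ι) → LinearMap.range (T i) :=
    LinearMap.pi fun i => (T i).rangeRestrict
  let sumRanges := LinearMap.lsum K (fun i => LinearMap.range (T i)) ℕ
    fun i => (LinearMap.range (T i)).subtype
  have hcomp : sumRanges ∘ₗ toRanges = 0 := by
    rw [← hT]
    ext v
    simp [sumRanges, toRanges, LinearMap.lsum_apply]
  have hrank := finrank_range_add_finrank_range_le_of_comp_eq_zero hcomp
  have hker : LinearMap.ker toRanges = ⨅ i, LinearMap.ker (T i) := by
    simp [toRanges, LinearMap.ker_pi]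
  have hrange : LinearMap.range sumRanges = ⨆ i, LinearMap.range (T i) := by
    simp only [sumRanges, range_lsum, Submodule.range_subtype]
  have hV := toRanges.finrank_range_add_finrank_ker
  have hW := Subspace.finrank_add_finrank_dualAnnihilator_eq (⨆ i, LinearMap.range (T i))
  rw [finrank_pi_fintype, hrange] at hrank
  rw [hker] at hV
  rw [iInf_ker_dualMap]
  lia

end LinearAlgebra

section Orbits

variable {α β : Type*}

/-- The number of orbits of a group `H` of permutations. -/
noncomputable def orbitCount (H : Subgroup (Perm α)) : ℕ :=
  Nat.card (MulAction.orbitRel.Quotient H α)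

theorem orbitRel_zpowers_iff {τ : Perm α} {x y : α} :
    MulAction.orbitRel (Subgroup.zpowers τ) α x y ↔ τ.SameCycle x y := by
  rw [sameCycle_comm]
  exact Subgroup.exists_zpowers

theorem comp_eq_of_mem_closure {S : Set (Perm α)} {f : α → β} (hf : ∀ g ∈ S, f ∘ g = f)
    {g : Perm α} (hg : g ∈ Subgroup.closure S) : f ∘ g = f := by
  induction hg using Subgroup.closure_induction with
  | mem g hg => exact hf g hg
  | one => rfl
  | mul a b _ _ ha hb => rw [coe_mul, ← Function.comp_assoc, ha, hb]
  | inv a _ ha => nth_rw 1 [← ha, Function.comp_assoc, ← coe_mul, mul_inv_cancel, coe_one,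
      Function.comp_id]

theorem forall_apply_eq_iff_of_isCycleOn_univ {π : Perm α} (hπ : π.IsCycleOn Set.univ)
    (f : α → β) (a₀ : α) : (∀ a, f (π a) = f a) ↔ ∀ a, f a = f a₀ := by
  refine ⟨fun h a => ?_, fun h a => by rw [h, h a]⟩
  obtain ⟨i, rfl⟩ := hπ.2 (Set.mem_univ a₀) (Set.mem_univ a)
  have hi : π ^ i ∈ Subgroup.closure {π} := by
    rw [← Subgroup.zpowers_eq_closure]
    exact Subgroup.zpow_mem_zpowers π i
  have hf : ∀ g ∈ ({π} : Set (Perm α)), f ∘ g = f := by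
    rintro _ rfl
    exact funext h
  exact congrFun (comp_eq_of_mem_closure hf hi) a₀

theorem sum_range_pow_apply_of_isCycleOn_univ {M : Type*} [AddCommMonoid M] [Fintype α] {π : Perm α}
    (hπ : π.IsCycleOn Set.univ) (f : α → M) (a : α) :
    ∑ q ∈ Finset.range (Fintype.card α), f ((π ^ q) a) = ∑ b, f b := by
  rw [← Finset.coe_univ] at hπ
  refine Finset.sum_nbij (fun q => (π ^ q) a) (by simp) ?_ ?_ (by simp)
  · intro m hm n hn hmn
    have h := (hπ.pow_apply_eq_pow_apply (Finset.mem_univ a)).1 hmn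
    rw [Finset.coe_range, Set.mem_Iio] at hm hn
    exact h.eq_of_lt_of_lt hm hn
  · intro b _
    obtain ⟨n, hn, rfl⟩ := hπ.exists_pow_eq (Finset.mem_univ a) (Finset.mem_univ b)
    exact ⟨n, by simpa using hn, rfl⟩

end Orbits

section InvariantFunctions

variable {α : Type*} (R : Type*) [Semiring R]

/-- The space of functions with values in `R` invariant under every permutation in `S`; its
dimension counts the orbits of the group generated by `S`. -/
def invariantFunctions (S : Set (Perm α)) : Submodule R (α → R) where
  carrier := {f | ∀ g ∈ S, f ∘ g = f}
  zero_mem' _ _ := rfl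
  add_mem' {f f'} hf hf' g hg := by rw [Pi.add_comp, hf g hg, hf' g hg]
  smul_mem' a f hf g hg := by rw [Pi.smul_comp, hf g hg]

variable {R}

theorem mem_invariantFunctions {S : Set (Perm α)} {f : α → R} :
    f ∈ invariantFunctions R S ↔ ∀ g ∈ S, f ∘ g = f :=
  Iff.rfl

theorem invariantFunctions_eq_range_funLeft (S : Set (Perm α)) :
    invariantFunctions R S = LinearMap.range (LinearMap.funLeft R R
      (Quotient.mk _ : α → MulAction.orbitRel.Quotient (Subgroup.closure S) α)) := by
  ext f
  constructor
  · intro hf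
    refine ⟨Quotient.lift f ?_, rfl⟩
    rintro _ x ⟨⟨g, hg⟩, rfl⟩
    exact congrFun (comp_eq_of_mem_closure hf hg) x
  · rintro ⟨f, rfl⟩ g hg
    exact funext fun x => congrArg f (Quotient.sound ⟨⟨g, Subgroup.subset_closure hg⟩, rfl⟩)

variable [StrongRankCondition R] [Finite α]

theorem finrank_invariantFunctions (S : Set (Perm α)) :
    finrank R (invariantFunctions R S) = orbitCount (Subgroup.closure S) := by
  have := Fintype.ofFinite (MulAction.orbitRel.Quotient (Subgroup.closure S) α)
  rw [invariantFunctions_eq_range_funLeft, LinearMap.finrank_range_of_inj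
    (LinearMap.funLeft_injective_of_surjective R R _ Quotient.mk_surjective),
    finrank_fintype_fun_eq_card, orbitCount, Nat.card_eq_fintype_card]

theorem finrank_invariantFunctions_singleton (τ : Perm α) :
    finrank R (invariantFunctions R {τ}) = orbitCount (Subgroup.zpowers τ) := by
  rw [finrank_invariantFunctions, Subgroup.zpowers_eq_closure]

end InvariantFunctions

section FaceOperator

variable {α ι : Type*} (R : Type*) [Ring R]

/-- The `c`-th operator to which Scott's lemma is applied, `f ↦ f ∘ σ (π c) - f ∘ σ c`. -/
def faceOperator (σ : ι → Perm α) (π : Perm ι) (c : ι) : (α → R) →ₗ[R] α → R :=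
  LinearMap.funLeft R R (σ (π c)) - LinearMap.funLeft R R (σ c)

variable {R} (σ : ι → Perm α) (π : Perm ι)

theorem mem_ker_faceOperator {c : ι} {f : α → R} :
    f ∈ LinearMap.ker (faceOperator R σ π c) ↔ f ∘ σ (π c) = f ∘ σ c := by
  rw [LinearMap.mem_ker, faceOperator, LinearMap.sub_apply, sub_eq_zero]
  rfl

theorem sum_faceOperator [Fintype ι] : ∑ c, faceOperator R σ π c = 0 := by
  simp only [faceOperator, Finset.sum_sub_distrib]
  rw [Equiv.sum_comp π fun c => LinearMap.funLeft R R (σ c), sub_self]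

theorem ker_faceOperator (c : ι) :
    LinearMap.ker (faceOperator R σ π c) = invariantFunctions R {σ c * (σ (π c))⁻¹} := by
  ext f
  simp only [mem_ker_faceOperator, mem_invariantFunctions, Set.mem_singleton_iff, forall_eq]
  rw [coe_mul, ← Function.comp_assoc, coe_inv, comp_symm_eq, eq_comm]

theorem finrank_range_faceOperator_add {K : Type*} [DivisionRing K] [Fintype α] (c : ι) :
    finrank K (LinearMap.range (faceOperator K σ π c)) +
      orbitCount (Subgroup.zpowers (σ c * (σ (π c))⁻¹)) = Fintype.card α := by
  rw [← finrank_invariantFunctions_singleton (R := K), ← ker_faceOperator,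
    LinearMap.finrank_range_add_finrank_ker, finrank_fintype_fun_eq_card]

/-- The permutations of the white vertices which follow the edges of some color to the black
vertices and return along those of color `c₀`; the orbits of the group they generate are the
connected components of the graph encoded by `σ`. -/
def bicoloredPaths (σ : ι → Perm α) (c₀ : ι) : Set (Perm α) :=
  Set.range fun c => (σ c₀)⁻¹ * σ c

variable {σ π}

theorem iInf_ker_faceOperator (hπ : π.IsCycleOn Set.univ) (c₀ : ι) :
    ⨅ c, LinearMap.ker (faceOperator R σ π c) = (invariantFunctions R (bicoloredPaths σ c₀)).comap
      (LinearEquiv.funCongrLeft R R (σ c₀)).toLinearMap := by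
  ext f
  simp only [Submodule.mem_iInf, mem_ker_faceOperator]
  rw [forall_apply_eq_iff_of_isCycleOn_univ hπ (fun c => f ∘ σ c) c₀, Submodule.mem_comap,
    mem_invariantFunctions, bicoloredPaths, Set.forall_mem_range]
  have hcancel (c : ι) : (f ∘ σ c₀) ∘ ⇑((σ c₀)⁻¹ * σ c) = f ∘ σ c := by
    ext x
    simp
  exact forall_congr' fun c => (Eq.congr_left (hcancel c)).symm

theorem comap_dotProductEquiv_iInf_ker_dualMap_faceOperator {R : Type*} [CommRing R] [Fintype α]
    [DecidableEq α] (hπ : π.IsCycleOn Set.univ) (c₀ : ι) :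
    (⨅ c, LinearMap.ker (faceOperator R σ π c).dualMap).comap (dotProductEquiv R α).toLinearMap =
      invariantFunctions R (bicoloredPaths σ c₀) := by
  ext h
  have hdual (c : ι) : (faceOperator R σ π c).dualMap (dotProductEquiv R α h) = 0 ↔
      h ∘ ⇑(σ (π c))⁻¹ = h ∘ ⇑(σ c)⁻¹ := by
    rw [LinearMap.dualMap_apply', faceOperator, LinearMap.comp_sub, dotProductEquiv_comp_funLeft,
      dotProductEquiv_comp_funLeft, sub_eq_zero, EmbeddingLike.apply_eq_iff_eq]
  simp only [Submodule.mem_comap, Submodule.mem_iInf, LinearMap.mem_ker, LinearEquiv.coe_coe,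
    hdual]
  rw [forall_apply_eq_iff_of_isCycleOn_univ hπ (fun c => h ∘ ⇑(σ c)⁻¹) c₀, mem_invariantFunctions,
    bicoloredPaths, Set.forall_mem_range]
  refine forall_congr' fun c => ?_
  rw [coe_mul, ← Function.comp_assoc, coe_inv (σ c), comp_symm_eq, eq_comm]

end FaceOperator

section OrbitParity

variable {α : Type*} [Fintype α] [DecidableEq α]

/-- A label of the `τ`-orbit of `x`: the cycle factor of `τ` through `x`, or `x` itself if it is a
fixed point and so lies in no cycle factor. -/
def orbitLabel (τ : Perm α) (x : α) : Perm α ⊕ α :=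
  if τ x = x then .inr x else .inl (τ.cycleOf x)

theorem orbitLabel_eq_orbitLabel_iff {τ : Perm α} {x y : α} :
    orbitLabel τ x = orbitLabel τ y ↔ τ.SameCycle x y := by
  by_cases hx : τ x = x <;> by_cases hy : τ y = y <;>
    simp only [orbitLabel, hx, hy, if_true, if_false]
  · rw [Sum.inr.injEq]
    exact ⟨fun h => h ▸ .rfl, fun h => h.eq_of_left hx⟩
  · simpa using fun h : τ.SameCycle x y => hy (h.apply_eq_self_iff.1 hx)
  · simpa using fun h : τ.SameCycle x y => hx (h.apply_eq_self_iff.2 hy)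
  · rw [Sum.inl.injEq, sameCycle_iff_cycleOf_eq_of_mem_support (mem_support.2 hx)
      (mem_support.2 hy)]

theorem range_orbitLabel (τ : Perm α) :
    Set.range (orbitLabel τ) = (τ.cycleFactorsFinset.disjSum τ.supportᶜ : Finset (Perm α ⊕ α)) := by
  ext (c | x)
  · suffices (∃ x, τ x ≠ x ∧ τ.cycleOf x = c) ↔ c ∈ τ.cycleFactorsFinset by
      simpa [orbitLabel, ite_eq_iff] using this
    constructor
    · rintro ⟨x, hx, rfl⟩
      exact cycleOf_mem_cycleFactorsFinset_iff.2 (mem_support.2 hx)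
    · intro hc
      obtain ⟨x, hx⟩ := (mem_cycleFactorsFinset_iff.1 hc).1.nonempty_support
      exact ⟨x, mem_support.1 (mem_cycleFactorsFinset_support_le hc hx),
        (cycle_is_cycleOf hx hc).symm⟩
  · simp [orbitLabel, ite_eq_iff]

theorem orbitCount_zpowers (τ : Perm α) :
    orbitCount (Subgroup.zpowers τ) = τ.cycleType.card + τ.supportᶜ.card := by
  have hker : MulAction.orbitRel (Subgroup.zpowers τ) α = Setoid.ker (orbitLabel τ) :=
    Setoid.ext fun x y => orbitRel_zpowers_iff.trans orbitLabel_eq_orbitLabel_iff.symm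
  rw [orbitCount, MulAction.orbitRel.Quotient, hker,
    Nat.card_congr (Setoid.quotientKerEquivRange _), range_orbitLabel, Nat.card_coe_set_eq,
    Set.ncard_coe_finset, Finset.card_disjSum, cycleType_def, Multiset.card_map, Finset.card_val]

theorem sign_eq_neg_one_pow_card_add_orbitCount (τ : Perm α) :
    sign τ = (-1) ^ (Fintype.card α + orbitCount (Subgroup.zpowers τ)) := by
  rw [sign_of_cycleType, sum_cycleType, orbitCount_zpowers, ← Finset.card_add_card_compl τ.support]
  exact neg_one_pow_congr (by grind)

end OrbitParity

section Genus

variable {α ι : Type*} [Fintype α] [Fintype ι] {σ : ι → Perm α} {π : Perm ι}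

theorem sum_orbitCount_add_le (hπ : π.IsCycleOn Set.univ) (c₀ : ι) :
    ∑ c, orbitCount (Subgroup.zpowers (σ c * (σ (π c))⁻¹)) + 2 * Fintype.card α ≤
      Fintype.card ι * Fintype.card α +
        2 * orbitCount (Subgroup.closure (bicoloredPaths σ c₀)) := by
  classical
  have hscott := finrank_add_finrank_le_sum_finrank_range (sum_faceOperator (R := ℚ) σ π)
  have hker : finrank ℚ (⨅ c, LinearMap.ker (faceOperator ℚ σ π c) : Submodule ℚ (α → ℚ)) =
      orbitCount (Subgroup.closure (bicoloredPaths σ c₀)) := by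
    rw [iInf_ker_faceOperator hπ c₀, ← finrank_invariantFunctions (R := ℚ),
      ((LinearEquiv.funCongrLeft ℚ ℚ (σ c₀)).ofSubmodule' _).finrank_eq]
  have hcoker : finrank ℚ (⨅ c, LinearMap.ker (faceOperator ℚ σ π c).dualMap :
      Submodule ℚ (Dual ℚ (α → ℚ))) = orbitCount (Subgroup.closure (bicoloredPaths σ c₀)) := by
    rw [← ((dotProductEquiv ℚ α).ofSubmodule' _).finrank_eq,
      comap_dotProductEquiv_iInf_ker_dualMap_faceOperator hπ c₀, finrank_invariantFunctions]
  have hrank : ∑ c, finrank ℚ (LinearMap.range (faceOperator ℚ σ π c)) +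
      ∑ c, orbitCount (Subgroup.zpowers (σ c * (σ (π c))⁻¹)) =
        Fintype.card ι * Fintype.card α := by
    simp [← Finset.sum_add_distrib, finrank_range_faceOperator_add]
  rw [finrank_fintype_fun_eq_card] at hscott
  lia

theorem even_card_mul_card_add_sum_orbitCount (σ : ι → Perm α) (π : Perm ι) :
    Even (Fintype.card ι * Fintype.card α +
      ∑ c, orbitCount (Subgroup.zpowers (σ c * (σ (π c))⁻¹))) := by
  classical
  have hsign : ∏ c, sign (σ c * (σ (π c))⁻¹) = 1 := by
    simp only [map_mul, sign_inv, Finset.prod_mul_distrib]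
    rw [Equiv.prod_comp π fun c => sign (σ c), Int.units_mul_self]
  simp only [sign_eq_neg_one_pow_card_add_orbitCount, Finset.prod_pow_eq_pow_sum,
    Finset.sum_add_distrib, Finset.sum_const, Finset.card_univ, smul_eq_mul] at hsign
  rwa [neg_one_pow_eq_one_iff_even (by decide)] at hsign

theorem exists_genus (hπ : π.IsCycleOn Set.univ) (c₀ : ι) :
    ∃ g : ℕ, ∑ c, orbitCount (Subgroup.zpowers (σ c * (σ (π c))⁻¹)) + 2 * Fintype.card α + 2 * g =
      Fintype.card ι * Fintype.card α +
        2 * orbitCount (Subgroup.closure (bicoloredPaths σ c₀)) := by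
  obtain ⟨m, hm⟩ := even_card_mul_card_add_sum_orbitCount σ π
  obtain ⟨d, hd⟩ := Nat.exists_eq_add_of_le (sum_orbitCount_add_le (σ := σ) hπ c₀)
  exact ⟨d / 2, by lia⟩

end Genus

section Jackets

variable {k D : ℕ} (σ : Fin (D + 1) → Perm (Fin k))

theorem compCount_eq_orbitCount :
    compCount σ = orbitCount (Subgroup.closure (bicoloredPaths σ 0)) := by
  have hpaths : bicoloredPaths σ 0 =
      insert 1 {g : Perm (Fin k) | ∃ c : Fin (D + 1), c ≠ 0 ∧ g = (σ 0)⁻¹ * σ c} := by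
    ext g
    constructor
    · rintro ⟨c, rfl⟩
      obtain rfl | hc := eq_or_ne c 0
      · exact .inl (inv_mul_cancel _)
      · exact .inr ⟨c, hc, rfl⟩
    · rintro (rfl | ⟨c, -, rfl⟩)
      · exact ⟨0, inv_mul_cancel _⟩
      · exact ⟨c, rfl⟩
  rw [hpaths, Subgroup.closure_insert_one]
  rfl

theorem jacketFaceCount_eq_sum_orbitCount {π : Perm (Fin (D + 1))} (hπ : π.IsCycleOn Set.univ) :
    jacketFaceCount σ π = ∑ c, orbitCount (Subgroup.zpowers (σ c * (σ (π c))⁻¹)) := by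
  have hsum := sum_range_pow_apply_of_isCycleOn_univ hπ (fun c => cycleCount (σ c * (σ (π c))⁻¹)) 0
  rw [Fintype.card_fin] at hsum
  simp only [jacketFaceCount, pow_succ', mul_apply, hsum]
  rfl

end Jackets

theorem jacket_euler_connected_general {k D : ℕ} (σ : Fin (D + 1) → Perm (Fin k))
    {π : Perm (Fin (D + 1))} (hcyc : π.IsCycle) (hsupp : π.support = Finset.univ) :
    (∃ g : ℕ, (jacketFaceCount σ π : ℤ) = (D - 1 : ℤ) * k + 2 * compCount σ - 2 * g) ∧
      jacketFaceCount σ π ≤ (D - 1) * k + 2 * compCount σ ∧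
      jacketFaceCount σ π % 2 = ((D - 1) * k) % 2 := by
  have hπ : π.IsCycleOn Set.univ := by
    simpa [← mem_support, hsupp] using hcyc.isCycleOn
  have hcard : 2 ≤ D + 1 := by
    simpa [hsupp] using hcyc.two_le_card_support
  obtain ⟨d, rfl⟩ : ∃ d, D = d + 1 := Nat.exists_eq_add_of_le' (by lia)
  obtain ⟨g, hg⟩ := exists_genus (σ := σ) hπ 0
  rw [← jacketFaceCount_eq_sum_orbitCount σ hπ, ← compCount_eq_orbitCount, Fintype.card_fin,
    Fintype.card_fin, show (d + 1 + 1) * k = d * k + 2 * k by ring] at hg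
  have hcast : (((d + 1 : ℕ) : ℤ) - 1) * k = ((d * k : ℕ) : ℤ) := by push_cast; ring
  rw [hcast, Nat.add_sub_cancel]
  exact ⟨⟨g, by lia⟩, by lia, by lia⟩

/-- Euler relation for jackets (connected case): if the graph encoded by `σ` is connected
then for every cyclic permutation `π` of the colors there is a nonnegative integer `g`
(the genus of the jacket `J_π`) with `F_π(σ) = (D−1)·k + 2 − 2g`; in particular
`F_π(σ) ≤ (D−1)·k + 2` and `F_π(σ)` has the same parity as `(D−1)·k`. -/
theorem jacket_euler_connected (k D : ℕ) (hk : 1 ≤ k) (hD : 2 ≤ D)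
    (σ : Fin (D + 1) → Equiv.Perm (Fin k)) (hconn : compCount σ = 1)
    (π : Equiv.Perm (Fin (D + 1))) (hcyc : π.IsCycle) (hsupp : π.support = Finset.univ) :
    (∃ g : ℕ, (jacketFaceCount σ π : ℤ) = (D - 1 : ℤ) * k + 2 - 2 * g) ∧
      jacketFaceCount σ π ≤ (D - 1) * k + 2 ∧
      jacketFaceCount σ π % 2 = ((D - 1) * k) % 2 := by
  simpa [hconn] using jacket_euler_connected_general σ hcyc hsupp
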